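/- Let ε ∈ (0, π/6) and let G = (V,E) be an ε-regular graph with #V = n such that every straight path of G is open. Then, counting strata with multiplicity, Σ_{s ∈ S(G)} l(s) = 2n. -/

import Mathlib

open scoped Real

noncomputable section

abbrev Pt : Type := EuclideanSpace ℝ (Fin 2)

/-- The clockwise angle in `[0, 2π)` between the vectors `u` and `v`. -/
noncomputable def cwAngle (u v : Pt) : ℝ :=
  let a := Complex.arg ((⟨u 0, u 1⟩ : ℂ) * (starRingEnd ℂ) (⟨v 0, v 1⟩ : ℂ))
  if a < 0 then a + 2 * π else a

/-- A graph with finitely many vertices in the plane and unordered pairs of distinct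
vertices as edges. -/
structure BondGraph where
  V : Set Pt
  finV : V.Finite
  E : Set (Sym2 Pt)
  not_diag : ∀ e ∈ E, ¬ e.IsDiag
  mem_V : ∀ e ∈ E, ∀ x ∈ e, x ∈ V

/-- The neighborhood `N(x, E)`. -/
def nbhd (G : BondGraph) (x : Pt) : Set Pt := {y | s(x, y) ∈ G.E}

/-- The degree `#N(x, E)`. -/
noncomputable def deg (G : BondGraph) (x : Pt) : ℕ := (nbhd G x).ncard

/-- The bond energy `F_bond(G) = Σ_{x ∈ V} (4 − #N(x,E))`. -/
noncomputable def Fbond (G : BondGraph) : ℤ := ∑ᶠ x ∈ G.V, ((4 : ℤ) - (deg G x : ℤ))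

def goodAngles (ε : ℝ) : Set ℝ :=
  Set.Icc (π / 2 - ε) (π / 2 + ε) ∪ Set.Icc (π - ε) (π + ε) ∪
    Set.Icc (3 * π / 2 - ε) (3 * π / 2 + ε)

/-- `ε`-regularity of a graph. -/
def EpsRegular (ε : ℝ) (G : BondGraph) : Prop :=
  (∀ x y : Pt, s(x, y) ∈ G.E → 1 - ε ≤ dist x y) ∧
  (∀ x y z : Pt, s(x, y) ∈ G.E → s(z, y) ∈ G.E → x ≠ z →
    cwAngle (x - y) (z - y) ∈ goodAngles ε)

/-- The `i`-th vertex of a path (with junk value `0` out of range). -/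
def nth (γ : List Pt) (i : ℕ) : Pt := γ.getD i 0

/-- The interior angle `θ_{i+2} = θ_{x_{i+2}, x_{i+1}, x_i}` of a path (`0`-based). -/
noncomputable def pathAngle (γ : List Pt) (i : ℕ) : ℝ :=
  cwAngle (nth γ (i + 2) - nth γ (i + 1)) (nth γ i - nth γ (i + 1))

/-- The list of (unordered) edges of a path. -/
def pathEdges (γ : List Pt) : List (Sym2 Pt) := (γ.zip γ.tail).map (fun p => s(p.1, p.2))

/-- A straight path of the graph `G`. -/
def IsStraightPath (ε : ℝ) (G : BondGraph) (γ : List Pt) : Prop :=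
  2 ≤ γ.length ∧
  (∀ x ∈ γ, x ∈ G.V) ∧
  γ.Chain' (fun a b => s(a, b) ∈ G.E) ∧
  (∀ i : ℕ, i + 2 < γ.length → pathAngle γ i ∈ Set.Icc (π - ε) (π + ε)) ∧
  (pathEdges γ).Nodup

/-- A path is closed if its first and last points coincide. -/
def IsClosedPath (γ : List Pt) : Prop := γ.head? = γ.getLast?

/-- The angle excess `θ_ex(γ)` of a path. -/
noncomputable def thetaEx (γ : List Pt) : ℝ :=
  ∑ i ∈ Finset.range (γ.length - 2), |pathAngle γ i - π|

/-- Two lists are identified if they agree up to reversal. -/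
def revSetoid : Setoid (List Pt) where
  r a b := a = b ∨ a = b.reverse
  iseqv := by
    constructor
    · intro a; exact Or.inl rfl
    · intro a b h
      rcases h with h | h
      · exact Or.inl h.symm
      · right; rw [h, List.reverse_reverse]
    · intro a b c hab hbc
      rcases hab with h | h <;> rcases hbc with h' | h' <;>
        simp [h, h', List.reverse_reverse]

/-- An (undirected) stratum: a list of points up to reversal. -/
def Stratum : Type := Quotient revSetoid

/-- The length `l(s)` of a stratum. -/
def Stratum.len : Stratum → ℕ :=
  Quotient.lift List.length (by rintro a b (rfl | rfl) <;> simp)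

/-- The set of vertices of a stratum. -/
def Stratum.verts : Stratum → Set Pt :=
  Quotient.lift (fun l => {x : Pt | x ∈ l}) (by
    rintro a b (rfl | rfl)
    · rfl
    · ext x; simp)

/-- `γ` is a subpath of `γ'`, up to reversal. -/
def SubPathUpToRev (γ γ' : List Pt) : Prop := γ <:+: γ' ∨ γ <:+: γ'.reverse

/-- A maximal straight path (maximal with respect to inclusion). -/
def IsMaximalStraight (ε : ℝ) (G : BondGraph) (γ : List Pt) : Prop :=
  IsStraightPath ε G γ ∧
    ∀ γ' : List Pt, IsStraightPath ε G γ' → SubPathUpToRev γ γ' →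
      (γ' = γ ∨ γ' = γ.reverse)

/-- `x ∈ V₂^π`: a vertex of degree two whose bond angle lies in `[π−ε, π+ε]`. -/
def V2pi (ε : ℝ) (G : BondGraph) (x : Pt) : Prop :=
  x ∈ G.V ∧ ∃ x₁ x₂ : Pt, x₁ ≠ x₂ ∧ nbhd G x = {x₁, x₂} ∧
    cwAngle (x₁ - x) (x₂ - x) ∈ Set.Icc (π - ε) (π + ε)

/-- The set of strata `S(G)`: maximal straight paths, together with the degenerate
one-point stratum `(x)` counted twice for `x ∈ V₀` and once for `x ∈ V₁ ∪ V₂^π`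
(the `Fin 2` tag realizes the multiplicity). -/
def strataSet (ε : ℝ) (G : BondGraph) : Set (Stratum × Fin 2) :=
  {p | ∃ γ : List Pt, IsMaximalStraight ε G γ ∧ p = (Quotient.mk revSetoid γ, 0)}
  ∪ {p | ∃ x ∈ G.V, deg G x = 0 ∧
      (p = (Quotient.mk revSetoid [x], 0) ∨ p = (Quotient.mk revSetoid [x], 1))}
  ∪ {p | ∃ x ∈ G.V, (deg G x = 1 ∨ V2pi ε G x) ∧ p = (Quotient.mk revSetoid [x], 0)}

/-- The set of orthogonal strata `S^⊥(s)`. -/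
def orthStrata (ε : ℝ) (G : BondGraph) (s : Stratum × Fin 2) : Set (Stratum × Fin 2) :=
  {s' | s' ∈ strataSet ε G ∧ s' ≠ s ∧ (Stratum.verts s.1 ∩ Stratum.verts s'.1).Nonempty}


theorem cwAngle_nonneg (u v : Pt) : 0 ≤ cwAngle u v := by
  unfold cwAngle
  have := Complex.neg_pi_lt_arg ((⟨u 0, u 1⟩ : ℂ) * (starRingEnd ℂ) (⟨v 0, v 1⟩ : ℂ))
  dsimp only
  split_ifs <;> linarith [Real.pi_pos]

theorem cwAngle_lt (u v : Pt) : cwAngle u v < 2 * π := by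
  unfold cwAngle
  have := Complex.arg_le_pi ((⟨u 0, u 1⟩ : ℂ) * (starRingEnd ℂ) (⟨v 0, v 1⟩ : ℂ))
  dsimp only
  split_ifs <;> linarith [Real.pi_pos]

theorem toComplex_ne_zero {u : Pt} (hu : u ≠ 0) : (⟨u 0, u 1⟩ : ℂ) ≠ 0 := by
  intro h
  apply hu
  rw [Complex.ext_iff] at h
  ext i
  fin_cases i
  · exact h.1
  · exact h.2

theorem coe_cwAngle {u v : Pt} (hu : u ≠ 0) (hv : v ≠ 0) :
    (cwAngle u v : Real.Angle) =
      (Complex.arg ⟨u 0, u 1⟩ : Real.Angle) - (Complex.arg ⟨v 0, v 1⟩ : Real.Angle) := by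
  have hu' := toComplex_ne_zero hu
  have hv' := toComplex_ne_zero hv
  have key := Complex.arg_mul_coe_angle hu' ((map_ne_zero (starRingEnd ℂ)).2 hv')
  rw [Complex.arg_conj_coe_angle, ← sub_eq_add_neg] at key
  rw [← key]
  unfold cwAngle
  dsimp only
  split_ifs <;> simp

/-- Clockwise angles add up modulo a full turn. -/
theorem cwAngle_add {a b c : Pt} (ha : a ≠ 0) (hb : b ≠ 0) (hc : c ≠ 0) :
    cwAngle a b + cwAngle b c = cwAngle a c ∨
      cwAngle a b + cwAngle b c = cwAngle a c + 2 * π := by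
  have h : ((cwAngle a b + cwAngle b c : ℝ) : Real.Angle) = (cwAngle a c : ℝ) := by
    rw [Real.Angle.coe_add, coe_cwAngle ha hb, coe_cwAngle hb hc, coe_cwAngle ha hc]
    abel
  obtain ⟨k, hk⟩ := Real.Angle.angle_eq_iff_two_pi_dvd_sub.1 h
  have h1 := cwAngle_nonneg a b
  have h2 := cwAngle_nonneg b c
  have h3 := cwAngle_nonneg a c
  have h4 := cwAngle_lt a b
  have h5 := cwAngle_lt b c
  have h6 := cwAngle_lt a c
  have hk1 : (-1 : ℝ) < k := by
    by_contra! hcon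
    nlinarith [Real.pi_pos]
  have hk2 : (k : ℝ) < 2 := by
    by_contra! hcon
    nlinarith [Real.pi_pos]
  have hk1' : -1 < k := by exact_mod_cast hk1
  have hk2' : k < 2 := by exact_mod_cast hk2
  obtain rfl | rfl : k = 0 ∨ k = 1 := by omega
  · left; push_cast at hk; linarith
  · right; push_cast at hk; linarith

theorem cwAngle_self (a : Pt) : cwAngle a a = 0 := by
  unfold cwAngle
  dsimp only
  rw [Complex.mul_conj, Complex.arg_ofReal_of_nonneg (Complex.normSq_nonneg _)]
  simp

theorem cwAngle_swap_mem {ε : ℝ} (hε : ε < π / 6) {a b : Pt}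
    (h : cwAngle a b ∈ Set.Icc (π - ε) (π + ε)) :
    cwAngle b a ∈ Set.Icc (π - ε) (π + ε) := by
  have hpi := Real.pi_pos
  obtain ⟨h1, h2⟩ := h
  have ha : a ≠ 0 := by
    rintro rfl
    have : cwAngle 0 b = 0 := by
      unfold cwAngle
      have : (⟨(0 : Pt) 0, (0 : Pt) 1⟩ : ℂ) = 0 := rfl
      rw [this]
      simp
    linarith
  have hb : b ≠ 0 := by
    rintro rfl
    have : cwAngle a 0 = 0 := by
      unfold cwAngle
      have : (⟨(0 : Pt) 0, (0 : Pt) 1⟩ : ℂ) = 0 := rfl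
      rw [this]
      simp
    linarith
  have h3 := cwAngle_nonneg b a
  rcases cwAngle_add ha hb ha with h | h <;> rw [cwAngle_self] at h <;>
    constructor <;> linarith

theorem BondGraph.ne_of_mem {G : BondGraph} {x y : Pt} (h : s(x, y) ∈ G.E) : x ≠ y :=
  fun e => G.not_diag _ h (Sym2.mk_isDiag_iff.2 e)

/-- The edges joining `y` to `x` and to `z` continue each other straight through `y`. -/
def StraightAt (ε : ℝ) (G : BondGraph) (x y z : Pt) : Prop :=
  s(x, y) ∈ G.E ∧ s(z, y) ∈ G.E ∧ x ≠ z ∧ cwAngle (x - y) (z - y) ∈ Set.Icc (π - ε) (π + ε)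

section StraightAt

variable {ε : ℝ} {G : BondGraph}

theorem StraightAt.symm (hε : ε < π / 6) {x y z : Pt} (h : StraightAt ε G x y z) :
    StraightAt ε G z y x :=
  ⟨h.2.1, h.1, h.2.2.1.symm, cwAngle_swap_mem hε h.2.2.2⟩

theorem StraightAt.unique (hε : ε < π / 6) (hreg : EpsRegular ε G) {x y z w : Pt}
    (h : StraightAt ε G x y z) (h' : StraightAt ε G x y w) : z = w := by
  by_contra hne
  have hg := hreg.2 z y w h.2.1 h'.2.1 hne
  have := cwAngle_add (sub_ne_zero.2 (BondGraph.ne_of_mem h.1))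
    (sub_ne_zero.2 (BondGraph.ne_of_mem h.2.1)) (sub_ne_zero.2 (BondGraph.ne_of_mem h'.2.1))
  obtain ⟨-, -, -, h1, h2⟩ := h
  obtain ⟨-, -, -, h3, h4⟩ := h'
  rcases hg with (⟨h5, h6⟩ | ⟨h5, h6⟩) | ⟨h5, h6⟩ <;> rcases this with h | h <;> linarith

/-- Among three neighbours of a vertex, two are straight continuations of each other. -/
theorem exists_straightAt_of_three (hε : ε < π / 6) (hreg : EpsRegular ε G) {x a b c : Pt}
    (ha : s(a, x) ∈ G.E) (hb : s(b, x) ∈ G.E) (hc : s(c, x) ∈ G.E)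
    (hab : a ≠ b) (hbc : b ≠ c) (hac : a ≠ c) :
    StraightAt ε G a x b ∨ StraightAt ε G b x c ∨ StraightAt ε G a x c := by
  have := cwAngle_add (sub_ne_zero.2 (BondGraph.ne_of_mem ha))
    (sub_ne_zero.2 (BondGraph.ne_of_mem hb)) (sub_ne_zero.2 (BondGraph.ne_of_mem hc))
  rcases hreg.2 a x b ha hb hab with (⟨h1, h2⟩ | h) | ⟨h1, h2⟩
  · rcases hreg.2 b x c hb hc hbc with (⟨h3, h4⟩ | h) | ⟨h3, h4⟩
    · rcases hreg.2 a x c ha hc hac with (⟨h5, h6⟩ | h) | ⟨h5, h6⟩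
      · rcases this with h | h <;> linarith
      · exact Or.inr (Or.inr ⟨ha, hc, hac, h⟩)
      · rcases this with h | h <;> linarith
    · exact Or.inr (Or.inl ⟨hb, hc, hbc, h⟩)
    · rcases hreg.2 a x c ha hc hac with (⟨h5, h6⟩ | h) | ⟨h5, h6⟩
      · rcases this with h | h <;> linarith
      · exact Or.inr (Or.inr ⟨ha, hc, hac, h⟩)
      · rcases this with h | h <;> linarith
  · exact Or.inl ⟨ha, hb, hab, h⟩
  · rcases hreg.2 b x c hb hc hbc with (⟨h3, h4⟩ | h) | ⟨h3, h4⟩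
    · rcases hreg.2 a x c ha hc hac with (⟨h5, h6⟩ | h) | ⟨h5, h6⟩
      · rcases this with h | h <;> linarith
      · exact Or.inr (Or.inr ⟨ha, hc, hac, h⟩)
      · rcases this with h | h <;> linarith
    · exact Or.inr (Or.inl ⟨hb, hc, hbc, h⟩)
    · rcases hreg.2 a x c ha hc hac with (⟨h5, h6⟩ | h) | ⟨h5, h6⟩
      · rcases this with h | h <;> linarith
      · exact Or.inr (Or.inr ⟨ha, hc, hac, h⟩)
      · rcases this with h | h <;> linarith

end StraightAt

section PathEdges

@[simp] theorem pathEdges_nil : pathEdges [] = [] := rfl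

@[simp] theorem pathEdges_singleton (a : Pt) : pathEdges [a] = [] := rfl

@[simp] theorem pathEdges_cons_cons (a b : Pt) (l : List Pt) :
    pathEdges (a :: b :: l) = s(a, b) :: pathEdges (b :: l) := rfl

theorem pathEdges_append_cons (l m : List Pt) (a : Pt) :
    pathEdges (l ++ a :: m) = pathEdges (l ++ [a]) ++ pathEdges (a :: m) := by
  induction l with
  | nil => simp
  | cons b l ih => cases l <;> simp_all

theorem pathEdges_reverse (l : List Pt) : pathEdges l.reverse = (pathEdges l).reverse := by
  induction l with
  | nil => rfl
  | cons a l ih =>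
    cases l with
    | nil => rfl
    | cons b l =>
      rw [pathEdges_cons_cons, List.reverse_cons (as := pathEdges _), ← ih, List.reverse_cons,
        List.reverse_cons, List.append_assoc, List.singleton_append, pathEdges_append_cons]
      simp [Sym2.eq_swap]

theorem pathEdges_cons_sublist (a : Pt) (l : List Pt) :
    (pathEdges l).Sublist (pathEdges (a :: l)) := by
  cases l <;> simp

theorem pathEdges_suffix_sublist (A l : List Pt) :
    (pathEdges l).Sublist (pathEdges (A ++ l)) := by
  induction A with
  | nil => exact List.Sublist.refl _
  | cons a A ih => exact ih.trans (pathEdges_cons_sublist a _)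

theorem pathEdges_infix_sublist {l m : List Pt} (h : l <:+: m) :
    (pathEdges l).Sublist (pathEdges m) := by
  obtain ⟨A, B, rfl⟩ := h
  have h1 : (pathEdges l.reverse).Sublist (pathEdges (B.reverse ++ l.reverse)) :=
    pathEdges_suffix_sublist _ _
  rw [← List.reverse_append, pathEdges_reverse, pathEdges_reverse, List.reverse_sublist] at h1
  rw [List.append_assoc]
  exact h1.trans (pathEdges_suffix_sublist _ _)

theorem mem_of_mem_pathEdges {l : List Pt} {e : Sym2 Pt} (he : e ∈ pathEdges l) {x : Pt}
    (hx : x ∈ e) : x ∈ l := by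
  induction l with
  | nil => simp at he
  | cons a l ih =>
    cases l with
    | nil => simp at he
    | cons b l =>
      rw [pathEdges_cons_cons, List.mem_cons] at he
      rcases he with rfl | he
      · rcases Sym2.mem_iff.1 hx with rfl | rfl <;> simp
      · exact List.mem_cons_of_mem _ (ih he)

end PathEdges

section Paths

variable {ε : ℝ} {G : BondGraph}

theorem forall_pathAngle_iff (γ : List Pt) (S : Set ℝ) :
    (∀ i : ℕ, i + 2 < γ.length → pathAngle γ i ∈ S) ↔
      ∀ A u v w B, γ = A ++ u :: v :: w :: B → cwAngle (w - v) (u - v) ∈ S := by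
  constructor
  · rintro h A u v w B rfl
    have := h A.length (by simp)
    simpa [pathAngle, nth, List.getD_eq_getElem?_getD, List.getElem?_append_right] using this
  · intro h i hi
    have := h (γ.take i) γ[i] γ[i + 1] γ[i + 2] (γ.drop (i + 3)) (by simp)
    simpa [pathAngle, nth, List.getD_eq_getElem?_getD, hi, show i < γ.length by omega,
      show i + 1 < γ.length by omega] using this

theorem isStraightPath_iff (γ : List Pt) : IsStraightPath ε G γ ↔
    2 ≤ γ.length ∧ (∀ x ∈ γ, x ∈ G.V) ∧ γ.IsChain (fun a b => s(a, b) ∈ G.E) ∧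
    (∀ A u v w B, γ = A ++ u :: v :: w :: B → cwAngle (w - v) (u - v) ∈ Set.Icc (π - ε) (π + ε)) ∧
    (pathEdges γ).Nodup := by
  unfold IsStraightPath
  rw [forall_pathAngle_iff]
  rfl

theorem IsStraightPath.reverse (hε : ε < π / 6) {γ : List Pt} (h : IsStraightPath ε G γ) :
    IsStraightPath ε G γ.reverse := by
  rw [isStraightPath_iff] at h ⊢
  obtain ⟨h1, h2, h3, h4, h5⟩ := h
  refine ⟨by simpa using h1, by simpa using h2, ?_, ?_, ?_⟩
  · rw [List.isChain_reverse]
    exact h3.imp fun a b hab => by rwa [Sym2.eq_swap]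
  · intro A u v w B hγ
    apply cwAngle_swap_mem hε
    apply h4 B.reverse w v u A.reverse
    rw [← List.reverse_reverse γ, hγ]
    simp
  · rw [pathEdges_reverse]
    exact List.nodup_reverse.2 h5

theorem IsStraightPath.subpath {γ δ : List Pt} (h : IsStraightPath ε G γ) (hδ : δ <:+: γ)
    (hl : 2 ≤ δ.length) : IsStraightPath ε G δ := by
  rw [isStraightPath_iff] at h ⊢
  obtain ⟨-, h2, h3, h4, h5⟩ := h
  refine ⟨hl, fun x hx => h2 x (hδ.subset hx), h3.infix hδ, ?_,
    h5.sublist (pathEdges_infix_sublist hδ)⟩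
  rintro A u v w B rfl
  obtain ⟨C, D, rfl⟩ := hδ
  exact h4 (C ++ A) u v w (B ++ D) (by simp)

theorem isStraightPath_pair {x y : Pt} (h : s(x, y) ∈ G.E) : IsStraightPath ε G [x, y] := by
  rw [isStraightPath_iff]
  refine ⟨by simp, ?_, by simpa using h, ?_, by simp⟩
  · intro z hz
    exact G.mem_V _ h z (by simpa using hz)
  · intro A u v w B hA
    have := congrArg List.length hA
    simp at this
    omega

theorem IsStraightPath.nodup
    (hopen : ∀ γ : List Pt, IsStraightPath ε G γ → ¬ IsClosedPath γ) {γ : List Pt}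
    (h : IsStraightPath ε G γ) : γ.Nodup := by
  induction γ with
  | nil => simp
  | cons a l ih =>
    rw [List.nodup_cons]
    constructor
    · intro ha
      obtain ⟨s, t, rfl⟩ := List.append_of_mem ha
      refine hopen (a :: s ++ [a]) (h.subpath ⟨[], t, by simp⟩ (by simp)) ?_
      rw [IsClosedPath, List.getLast?_concat]
      rfl
    · by_cases hl : 2 ≤ l.length
      · exact ih (h.subpath (List.suffix_cons a l).isInfix hl)
      · match l, hl with
        | [], _ => simp
        | [b], _ => simp
        | _ :: _ :: _, hl => simp at hl

theorem IsStraightPath.edge {A B : List Pt} {u v : Pt}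
    (h : IsStraightPath ε G (A ++ u :: v :: B)) : s(u, v) ∈ G.E := by
  have := ((isStraightPath_iff _).1 (h.subpath (δ := [u, v]) ⟨A, B, by simp⟩ (by simp))).2.2.1
  simpa using this

theorem IsStraightPath.straightAt (hε : ε < π / 6)
    (hopen : ∀ γ : List Pt, IsStraightPath ε G γ → ¬ IsClosedPath γ) {A B : List Pt} {u v w : Pt}
    (h : IsStraightPath ε G (A ++ u :: v :: w :: B)) : StraightAt ε G u v w := by
  have h1 := h.edge
  have h2 : s(v, w) ∈ G.E := IsStraightPath.edge (A := A ++ [u]) (B := B) (by simpa using h)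
  have h3 : [u, v, w].Nodup :=
    (h.subpath (δ := [u, v, w]) ⟨A, B, by simp⟩ (by simp)).nodup hopen
  refine ⟨h1, by rwa [Sym2.eq_swap], ?_, ?_⟩
  · rintro rfl
    simp at h3
  · exact cwAngle_swap_mem hε (((isStraightPath_iff _).1 h).2.2.2.1 A u v w B rfl)

/-- A straight path can be prolonged along any straight continuation of its last edge. -/
theorem IsStraightPath.concat (hε : ε < π / 6)
    (hopen : ∀ γ : List Pt, IsStraightPath ε G γ → ¬ IsClosedPath γ) {A : List Pt} {u v w : Pt}
    (h : IsStraightPath ε G (A ++ [u, v])) (hs : StraightAt ε G u v w) :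
    IsStraightPath ε G (A ++ [u, v, w]) := by
  have hnd := h.nodup hopen
  rw [isStraightPath_iff] at h ⊢
  obtain ⟨-, h2, h3, h4, h5⟩ := h
  refine ⟨by simp, ?_, ?_, ?_, ?_⟩
  · intro x hx
    have : x ∈ A ++ [u, v] ∨ x = w := by
      simp only [List.mem_append, List.mem_cons, List.not_mem_nil, or_false] at hx ⊢
      tauto
    rcases this with hx | rfl
    · exact h2 x hx
    · exact G.mem_V _ hs.2.1 x (by simp)
  · have : A ++ [u, v, w] = (A ++ [u, v]) ++ [w] := by simp
    rw [this, List.isChain_append]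
    refine ⟨h3, by simp, ?_⟩
    simpa [Sym2.eq_swap] using hs.2.1
  · intro C u' v' w' D hC
    rcases List.eq_nil_or_concat D with rfl | ⟨D, d, rfl⟩
    · have hC' := congrArg List.reverse hC
      simp only [List.reverse_append, List.reverse_cons, List.reverse_nil, List.nil_append,
        List.cons_append, List.cons.injEq] at hC'
      obtain ⟨rfl, rfl, rfl, -⟩ := hC'
      exact cwAngle_swap_mem hε hs.2.2.2
    · have hC' : (A ++ [u, v]) ++ [w] = (C ++ u' :: v' :: w' :: D) ++ [d] := by simpa using hC
      exact h4 C u' v' w' D (List.append_inj_left' hC' rfl)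
  · have e1 : pathEdges (A ++ [u, v, w]) = pathEdges (A ++ [u, v]) ++ [s(v, w)] := by
      have := pathEdges_append_cons (A ++ [u]) [w] v
      simpa using this
    have e2 : pathEdges (A ++ [u, v]) = pathEdges (A ++ [u]) ++ [s(u, v)] := by
      simpa using pathEdges_append_cons A [v] u
    rw [e1, List.nodup_append]
    refine ⟨h5, by simp, ?_⟩
    rintro e he f hf rfl
    rw [List.mem_singleton] at hf
    subst hf
    rw [e2, List.mem_append, List.mem_singleton] at he
    rcases he with he | he
    · have hv := mem_of_mem_pathEdges he (x := v) (by simp)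
      have : ((A ++ [u]) ++ [v]).Nodup := by simpa using hnd
      exact (List.disjoint_of_nodup_append this) hv (by simp)
    · rw [Sym2.eq_swap, Sym2.congr_left] at he
      exact hs.2.2.1 he.symm

theorem IsMaximalStraight.reverse (hε : ε < π / 6) {γ : List Pt}
    (h : IsMaximalStraight ε G γ) : IsMaximalStraight ε G γ.reverse := by
  refine ⟨h.1.reverse hε, fun γ' h' hs => ?_⟩
  have := h.2 γ' h' (by
    rcases hs with hs | hs
    · right; rwa [← List.reverse_infix, List.reverse_reverse]
    · left; exact List.reverse_infix.1 hs)
  rw [List.reverse_reverse]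
  exact this.symm

theorem IsMaximalStraight.not_straightAt (hε : ε < π / 6)
    (hopen : ∀ γ : List Pt, IsStraightPath ε G γ → ¬ IsClosedPath γ) {A : List Pt} {u v w : Pt}
    (h : IsMaximalStraight ε G (A ++ [u, v])) : ¬ StraightAt ε G u v w := by
  intro hs
  have := h.2 _ (h.1.concat hε hopen hs) (Or.inl ⟨[], [w], by simp⟩)
  have hl : (A ++ [u, v, w]).length = (A ++ [u, v]).length := by
    rcases this with h | h <;> rw [h]
    simp
  simp at hl

/-- A maximal straight path is determined beyond any of its oriented edges. -/
theorem IsMaximalStraight.tail_unique (hε : ε < π / 6) (hreg : EpsRegular ε G)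
    (hopen : ∀ γ : List Pt, IsStraightPath ε G γ → ¬ IsClosedPath γ) {A A' B B' : List Pt}
    {u v : Pt} (h : IsMaximalStraight ε G (A ++ u :: v :: B))
    (h' : IsMaximalStraight ε G (A' ++ u :: v :: B')) : B = B' := by
  induction B generalizing A A' B' u v with
  | nil =>
    cases B' with
    | nil => rfl
    | cons w B' => exact absurd (h'.1.straightAt hε hopen) (h.not_straightAt hε hopen)
  | cons w B ih =>
    cases B' with
    | nil => exact absurd (h.1.straightAt hε hopen) (h'.not_straightAt hε hopen)
    | cons w' B' =>
      obtain rfl := (h.1.straightAt hε hopen).unique hε hreg (h'.1.straightAt hε hopen)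
      rw [ih (A := A ++ [u]) (A' := A' ++ [u]) (by simpa using h) (by simpa using h')]

theorem IsMaximalStraight.unique (hε : ε < π / 6) (hreg : EpsRegular ε G)
    (hopen : ∀ γ : List Pt, IsStraightPath ε G γ → ¬ IsClosedPath γ) {γ γ' : List Pt}
    {u v : Pt} (h : IsMaximalStraight ε G γ) (h' : IsMaximalStraight ε G γ')
    (hu : [u, v] <:+: γ) (hu' : [u, v] <:+: γ') : γ = γ' := by
  obtain ⟨A, B, rfl⟩ := hu
  obtain ⟨A', B', rfl⟩ := hu'
  have e1 : B = B' := IsMaximalStraight.tail_unique hε hreg hopen (A := A) (A' := A')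
    (by simpa using h) (by simpa using h')
  have e2 : A.reverse = A'.reverse :=
    IsMaximalStraight.tail_unique hε hreg hopen (A := B.reverse) (A' := B'.reverse)
    (u := v) (v := u) (by simpa using h.reverse hε) (by simpa using h'.reverse hε)
  rw [e1, List.reverse_injective e2]

/-- A maximal straight path through an edge follows its straight continuation backwards. -/
theorem IsMaximalStraight.infix_of_straightAt (hε : ε < π / 6) (hreg : EpsRegular ε G)
    (hopen : ∀ γ : List Pt, IsStraightPath ε G γ → ¬ IsClosedPath γ) {γ : List Pt}
    {x y z : Pt} (h : IsMaximalStraight ε G γ) (hxy : [x, y] <:+: γ)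
    (hs : StraightAt ε G y x z) : [z, x] <:+: γ := by
  obtain ⟨A, B, rfl⟩ := hxy
  rcases List.eq_nil_or_concat A with rfl | ⟨A, z', rfl⟩
  · exact absurd hs (IsMaximalStraight.not_straightAt hε hopen (A := B.reverse)
      (by simpa using h.reverse hε))
  · have : StraightAt ε G z' x y := IsStraightPath.straightAt hε hopen (A := A) (B := B)
      (by simpa using h.1)
    obtain rfl := (this.symm hε).unique hε hreg hs
    exact ⟨A, y :: B, by simp⟩

theorem finite_setOf_nodup_subset {α : Type*} {V : Set α} (hV : V.Finite) :
    {l : List α | l.Nodup ∧ ∀ x ∈ l, x ∈ V}.Finite := by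
  classical
  have := hV.fintype
  refine ((List.finite_length_le V (Fintype.card V)).image (List.map Subtype.val)).subset ?_
  rintro l ⟨hl, hlV⟩
  lift l to List V using hlV
  exact ⟨l, (List.Nodup.of_map _ hl).length_le_card, rfl⟩

theorem exists_isMaximalStraight
    (hopen : ∀ γ : List Pt, IsStraightPath ε G γ → ¬ IsClosedPath γ) (hε : ε < π / 6) {x y : Pt}
    (h : s(x, y) ∈ G.E) : ∃ γ, IsMaximalStraight ε G γ ∧ [x, y] <:+: γ := by
  have hfin : {γ | IsStraightPath ε G γ ∧ [x, y] <:+: γ}.Finite :=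
    (finite_setOf_nodup_subset G.finV).subset fun γ hγ => ⟨hγ.1.nodup hopen, hγ.1.2.1⟩
  obtain ⟨γ, ⟨hγ, hxy⟩, hmax⟩ := Set.exists_max_image _ List.length hfin
    ⟨[x, y], isStraightPath_pair h, List.infix_rfl⟩
  refine ⟨γ, ⟨hγ, fun γ' h' hs => ?_⟩, hxy⟩
  rcases hs with hs | hs
  · exact Or.inl (hs.eq_of_length_le (hmax γ' ⟨h', hxy.trans hs⟩)).symm
  · have := hmax γ'.reverse ⟨h'.reverse hε, hxy.trans hs⟩
    right
    rw [hs.eq_of_length_le this, List.reverse_reverse]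

theorem IsStraightPath.exists_neighbor {γ : List Pt} (h : IsStraightPath ε G γ)
    {x : Pt} (hx : x ∈ γ) :
    ∃ y, s(x, y) ∈ G.E ∧ ([x, y] <:+: γ ∨ [x, y] <:+: γ.reverse) := by
  obtain ⟨A, B, rfl⟩ := List.append_of_mem hx
  cases B with
  | cons y B => exact ⟨y, h.edge, Or.inl ⟨A, B, by simp⟩⟩
  | nil =>
    rcases List.eq_nil_or_concat A with rfl | ⟨A, y, rfl⟩
    · have := h.1
      simp at this
    · refine ⟨y, ?_, Or.inr ⟨[], A.reverse, by simp⟩⟩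
      rw [Sym2.eq_swap]
      exact IsStraightPath.edge (A := A) (B := []) (by simpa using h)

theorem IsStraightPath.eq_or_straightAt (hε : ε < π / 6)
    (hopen : ∀ γ : List Pt, IsStraightPath ε G γ → ¬ IsClosedPath γ) {γ : List Pt}
    (h : IsStraightPath ε G γ) {x y z : Pt} (hy : [x, y] <:+: γ)
    (hz : [x, z] <:+: γ ∨ [x, z] <:+: γ.reverse) : y = z ∨ StraightAt ε G y x z := by
  have hnd := h.nodup hopen
  obtain ⟨A, B, rfl⟩ := hy
  have hxA : x ∉ A := by
    intro hx
    simp only [List.append_assoc, List.cons_append, List.nil_append] at hnd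
    exact (List.disjoint_of_nodup_append hnd) hx (by simp)
  have split {C D : List Pt} (e : A ++ x :: y :: B = C ++ x :: D) : C = A ∧ D = y :: B := by
    have hx : x ∉ C := by
      intro hx
      have : (C ++ x :: D).Nodup := by rw [← e]; simpa using hnd
      exact (List.disjoint_of_nodup_append this) hx (by simp)
    rcases List.append_eq_append_iff.1 e with ⟨as, h1, h2⟩ | ⟨as, h1, h2⟩ <;>
      cases as <;> simp_all
  rcases hz with ⟨C, D, hCD⟩ | hz
  · left
    have := (split (C := C) (D := z :: D) (by simpa using hCD.symm)).2
    simpa using (List.cons.inj this).1.symm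
  · right
    rw [← List.reverse_infix, List.reverse_reverse] at hz
    obtain ⟨C, D, hCD⟩ := hz
    have := (split (C := C ++ [z]) (D := D) (by simpa using hCD.symm)).1
    subst this
    exact (IsStraightPath.straightAt hε hopen (A := C) (B := B) (by simpa using h)).symm hε

end Paths

section Strata

variable {ε : ℝ} {G : BondGraph}

theorem stratum_mk_eq_iff {γ γ' : List Pt} :
    (Quotient.mk revSetoid γ = Quotient.mk revSetoid γ') ↔ γ = γ' ∨ γ = γ'.reverse :=
  Quotient.eq

/-- The maximal straight paths through a vertex correspond to its neighbours, two neighbours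
giving the same path exactly when they continue each other straight. -/
theorem exists_stratum_map (hε : ε < π / 6) (hreg : EpsRegular ε G)
    (hopen : ∀ γ : List Pt, IsStraightPath ε G γ → ¬ IsClosedPath γ) (x : Pt) :
    ∃ f : Pt → Stratum,
      (∀ s : Stratum, (∃ γ, IsMaximalStraight ε G γ ∧ x ∈ γ ∧ s = Quotient.mk revSetoid γ) ↔
        ∃ y ∈ nbhd G x, s = f y) ∧
      ∀ y ∈ nbhd G x, ∀ z ∈ nbhd G x, f y = f z ↔ (y = z ∨ StraightAt ε G y x z) := by
  have hex : ∀ y, ∃ γ, y ∈ nbhd G x → IsMaximalStraight ε G γ ∧ [x, y] <:+: γ := by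
    intro y
    by_cases hy : y ∈ nbhd G x
    · obtain ⟨γ, hγ⟩ := exists_isMaximalStraight hopen hε hy
      exact ⟨γ, fun _ => hγ⟩
    · exact ⟨[], fun h => absurd h hy⟩
  choose g hg using hex
  refine ⟨fun y => Quotient.mk revSetoid (g y), fun s => ⟨?_, ?_⟩, fun y hy z hz => ?_⟩
  · rintro ⟨γ, hγ, hx, rfl⟩
    obtain ⟨y, hy, hxy⟩ := hγ.1.exists_neighbor hx
    obtain ⟨hm, hi⟩ := hg y hy
    refine ⟨y, hy, stratum_mk_eq_iff.2 ?_⟩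
    rcases hxy with hxy | hxy
    · exact Or.inl (hγ.unique hε hreg hopen hm hxy hi)
    · right
      rw [← (hγ.reverse hε).unique hε hreg hopen hm hxy hi, List.reverse_reverse]
  · rintro ⟨y, hy, rfl⟩
    obtain ⟨hm, hi⟩ := hg y hy
    exact ⟨g y, hm, hi.subset (by simp), rfl⟩
  · obtain ⟨hm, hi⟩ := hg y hy
    obtain ⟨hm', hi'⟩ := hg z hz
    refine stratum_mk_eq_iff.trans ?_
    constructor
    · intro h
      refine hm.1.eq_or_straightAt hε hopen hi ?_
      rcases h with h | h
      · left; rwa [h]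
      · right; rwa [h, List.reverse_reverse]
    · rintro (rfl | hs)
      · exact Or.inl rfl
      · right
        have h1 := hm.infix_of_straightAt hε hreg hopen hi hs
        have h2 : [x, z] <:+: (g y).reverse := by
          rw [← List.reverse_infix, List.reverse_reverse]
          exact h1
        rw [← (hm.reverse hε).unique hε hreg hopen hm' h2 hi', List.reverse_reverse]

theorem mem_strata_through_iff {x : Pt} (hx : x ∈ G.V) (p : Stratum × Fin 2) :
    (p ∈ strataSet ε G ∧ x ∈ p.1.verts) ↔
      ((∃ γ, IsMaximalStraight ε G γ ∧ x ∈ γ ∧ p.1 = Quotient.mk revSetoid γ) ∧ p.2 = 0) ∨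
      (deg G x = 0 ∧ p.1 = Quotient.mk revSetoid [x]) ∨
      ((deg G x = 1 ∨ V2pi ε G x) ∧ p = (Quotient.mk revSetoid [x], 0)) := by
  constructor
  · rintro ⟨(⟨γ, hγ, rfl⟩ | ⟨y, hy, hd, hp⟩) | ⟨y, hy, hd, rfl⟩, hv⟩
    · exact Or.inl ⟨⟨γ, hγ, hv, rfl⟩, rfl⟩
    · have hp1 : p.1 = Quotient.mk revSetoid [y] := by rcases hp with rfl | rfl <;> rfl
      rw [hp1] at hv
      obtain rfl : x = y := List.mem_singleton.1 hv
      exact Or.inr (Or.inl ⟨hd, hp1⟩)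
    · obtain rfl : x = y := List.mem_singleton.1 hv
      exact Or.inr (Or.inr ⟨hd, rfl⟩)
  · have hxx : x ∈ Stratum.verts (Quotient.mk revSetoid [x]) := List.mem_singleton.2 rfl
    obtain ⟨s, i⟩ := p
    rintro (⟨⟨γ, hγ, hv, h1⟩, h2⟩ | ⟨hd, h1⟩ | ⟨hd, h1⟩)
    · dsimp only at h1 h2
      subst h1 h2
      exact ⟨Or.inl (Or.inl ⟨γ, hγ, rfl⟩), hv⟩
    · dsimp only at h1
      subst h1
      refine ⟨Or.inl (Or.inr ⟨x, hx, hd, ?_⟩), hxx⟩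
      fin_cases i
      · exact Or.inl rfl
      · exact Or.inr rfl
    · rw [h1]
      exact ⟨Or.inr ⟨x, hx, hd, rfl⟩, hxx⟩

theorem nbhd_finite (G : BondGraph) (x : Pt) : (nbhd G x).Finite :=
  G.finV.subset fun y hy => G.mem_V _ hy y (by simp)

/-- Every vertex lies on exactly two strata, counted with multiplicity. -/
theorem ncard_strata_through (hε : ε < π / 6) (hreg : EpsRegular ε G)
    (hopen : ∀ γ : List Pt, IsStraightPath ε G γ → ¬ IsClosedPath γ) {x : Pt} (hx : x ∈ G.V) :
    {p | p ∈ strataSet ε G ∧ x ∈ p.1.verts}.ncard = 2 := by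
  obtain ⟨f, hf, hff⟩ := exists_stratum_map hε hreg hopen x
  obtain ⟨d, hd⟩ : ∃ d : Stratum, d = Quotient.mk revSetoid [x] := ⟨_, rfl⟩
  have hmem (p : Stratum × Fin 2) : (p ∈ strataSet ε G ∧ x ∈ p.1.verts) ↔
      ((∃ y ∈ nbhd G x, p.1 = f y) ∧ p.2 = 0) ∨ (deg G x = 0 ∧ p.1 = d) ∨
      ((deg G x = 1 ∨ V2pi ε G x) ∧ p = (d, 0)) := by
    subst hd
    rw [mem_strata_through_iff hx, hf]
    exact Iff.rfl
  have hfx : ∀ y ∈ nbhd G x, f y ≠ d := by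
    intro y hy h
    obtain ⟨γ, hγ, -, hs⟩ := (hf (f y)).2 ⟨y, hy, rfl⟩
    replace hs := stratum_mk_eq_iff.1 (hd.symm.trans (h.symm.trans hs))
    have h2 := hγ.1.1
    have : [x].length = γ.length := by
      rcases hs with hs | hs <;> rw [hs]
      simp
    simp at this
    omega
  have hV2 : V2pi ε G x ↔ ∃ a b, nbhd G x = {a, b} ∧ StraightAt ε G a x b := by
    constructor
    · rintro ⟨-, a, b, hab, hN, hang⟩
      have ha : a ∈ nbhd G x := by rw [hN]; simp
      have hb : b ∈ nbhd G x := by rw [hN]; simp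
      exact ⟨a, b, hN, by rw [Sym2.eq_swap]; exact ha, by rw [Sym2.eq_swap]; exact hb, hab, hang⟩
    · rintro ⟨a, b, hN, -, -, hab, hang⟩
      exact ⟨hx, a, b, hab, hN, hang⟩
  rw [Set.ncard_eq_two]
  by_cases hns : ∃ a ∈ nbhd G x, ∃ b ∈ nbhd G x, a ≠ b ∧ ¬ StraightAt ε G a x b
  · obtain ⟨a, ha, b, hb, hab, hns⟩ := hns
    have hd0 : deg G x ≠ 0 := by
      intro h
      rw [deg, Set.ncard_eq_zero (nbhd_finite G x)] at h
      simp [h] at ha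
    have hd1 : deg G x ≠ 1 := by
      intro h
      obtain ⟨c, hc⟩ := Set.ncard_eq_one.1 h
      simp only [hc, Set.mem_singleton_iff] at ha hb
      exact hab (ha.trans hb.symm)
    have hdV : ¬ V2pi ε G x := by
      rw [hV2]
      rintro ⟨c, d, hN, hs⟩
      have hs' := hs.symm hε
      simp only [hN, Set.mem_insert_iff, Set.mem_singleton_iff] at ha hb
      rcases ha with rfl | rfl <;> rcases hb with rfl | rfl <;> tauto
    refine ⟨(f a, 0), (f b, 0), ?_, ?_⟩
    · intro h
      rcases (hff a ha b hb).1 (congrArg Prod.fst h) with h | h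
      · exact hab h
      · exact hns h
    · ext ⟨s, i⟩
      simp only [Set.mem_ofPred_eq, hmem, hd0, hd1, hdV, Set.mem_insert_iff,
        Set.mem_singleton_iff, Prod.mk.injEq, false_and, or_false, ← or_and_right]
      refine and_congr_left fun _ => ⟨?_, ?_⟩
      · rintro ⟨c, hc, rfl⟩
        rw [hff c hc a ha, hff c hc b hb]
        by_cases hca : c = a
        · exact Or.inl (Or.inl hca)
        by_cases hcb : c = b
        · exact Or.inr (Or.inl hcb)
        have ha' : s(a, x) ∈ G.E := by rw [Sym2.eq_swap]; exact ha
        have hb' : s(b, x) ∈ G.E := by rw [Sym2.eq_swap]; exact hb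
        have hc' : s(c, x) ∈ G.E := by rw [Sym2.eq_swap]; exact hc
        rcases exists_straightAt_of_three hε hreg hc' ha' hb' hca hab hcb with h | h | h
        · exact Or.inl (Or.inr h)
        · exact absurd h hns
        · exact Or.inr (Or.inr h)
      · rintro (rfl | rfl)
        · exact ⟨a, ha, rfl⟩
        · exact ⟨b, hb, rfl⟩
  · push Not at hns
    rcases (nbhd G x).eq_empty_or_nonempty with hN | ⟨a, ha⟩
    · refine ⟨(d, 0), (d, 1), by simp, ?_⟩
      have hdeg : deg G x = 0 := by simp [deg, hN]
      have hdV : ¬ V2pi ε G x := by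
        rw [hV2]
        rintro ⟨c, d, hN', -⟩
        have : c ∈ nbhd G x := by rw [hN']; simp
        simp [hN] at this
      ext ⟨s, i⟩
      simp only [Set.mem_ofPred_eq, hmem, hdeg, hdV, hN]
      fin_cases i <;> simp
    · have hd0 : deg G x ≠ 0 := by
        intro h
        rw [deg, Set.ncard_eq_zero (nbhd_finite G x)] at h
        simp [h] at ha
      have hdeg : deg G x = 1 ∨ V2pi ε G x := by
        by_cases hb : ∃ b ∈ nbhd G x, a ≠ b
        · obtain ⟨b, hb, hab⟩ := hb
          right
          rw [hV2]
          refine ⟨a, b, ?_, hns a ha b hb hab⟩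
          ext c
          simp only [Set.mem_insert_iff, Set.mem_singleton_iff]
          constructor
          · intro hc
            by_cases hca : c = a
            · exact Or.inl hca
            · exact Or.inr ((hns a ha c hc (Ne.symm hca)).unique hε hreg (hns a ha b hb hab))
          · rintro (rfl | rfl) <;> assumption
        · push Not at hb
          left
          rw [deg, Set.ncard_eq_one]
          exact ⟨a, Set.eq_singleton_iff_unique_mem.2 ⟨ha, fun b h => (hb b h).symm⟩⟩
      refine ⟨(f a, 0), (d, 0), ?_, ?_⟩
      · intro h
        exact hfx a ha (congrArg Prod.fst h)
      · ext ⟨s, i⟩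
        simp only [Set.mem_ofPred_eq, hmem, hd0, hdeg, Set.mem_insert_iff,
          Set.mem_singleton_iff, Prod.mk.injEq, false_and, false_or, true_and, ← or_and_right]
        refine and_congr_left fun _ => or_congr_left ⟨?_, ?_⟩
        · rintro ⟨c, hc, rfl⟩
          rw [hff c hc a ha]
          by_cases hca : c = a
          · exact Or.inl hca
          · exact Or.inr (hns c hc a ha hca)
        · rintro rfl
          exact ⟨a, ha, rfl⟩

theorem exists_nodup_of_mem_strataSet
    (hopen : ∀ γ : List Pt, IsStraightPath ε G γ → ¬ IsClosedPath γ) {p : Stratum × Fin 2}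
    (hp : p ∈ strataSet ε G) :
    ∃ l : List Pt, (l.Nodup ∧ ∀ x ∈ l, x ∈ G.V) ∧ p.1 = Quotient.mk revSetoid l := by
  rcases hp with (⟨γ, hγ, rfl⟩ | ⟨x, hx, -, hp⟩) | ⟨x, hx, -, rfl⟩
  · exact ⟨γ, ⟨hγ.1.nodup hopen, hγ.1.2.1⟩, rfl⟩
  · exact ⟨[x], by simpa using hx, by rcases hp with rfl | rfl <;> rfl⟩
  · exact ⟨[x], by simpa using hx, rfl⟩

theorem strataSet_finite
    (hopen : ∀ γ : List Pt, IsStraightPath ε G γ → ¬ IsClosedPath γ) :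
    (strataSet ε G).Finite := by
  refine (((finite_setOf_nodup_subset G.finV).image (Quotient.mk revSetoid)).prod
    (Set.finite_univ (α := Fin 2))).subset fun p hp => ?_
  obtain ⟨l, hl, h⟩ := exists_nodup_of_mem_strataSet hopen hp
  exact ⟨⟨l, hl, h.symm⟩, trivial⟩

end Strata

/-- **Lemma (properties of graphs containing only open paths, (i)).**
Counting strata with multiplicity, `Σ_{s ∈ S(G)} l(s) = 2n`. -/
theorem sum_strata_length (ε : ℝ) (hε0 : 0 < ε) (hε : ε < π / 6)
    (G : BondGraph) (n : ℕ) (hn : G.V.ncard = n) (hreg : EpsRegular ε G)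
    (hopen : ∀ γ : List Pt, IsStraightPath ε G γ → ¬ IsClosedPath γ) :
    ∑ᶠ p ∈ strataSet ε G, Stratum.len p.1 = 2 * n := by
  classical
  have hS := strataSet_finite hopen
  rw [finsum_mem_eq_finite_toFinset_sum _ hS]
  have hlen : ∀ p ∈ hS.toFinset, p.1.len =
      (Finset.bipartiteAbove (fun (p : Stratum × Fin 2) x => x ∈ p.1.verts)
        G.finV.toFinset p).card := by
    intro p hp
    obtain ⟨l, ⟨hl, hlV⟩, h⟩ := exists_nodup_of_mem_strataSet hopen (hS.mem_toFinset.1 hp)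
    have : Finset.bipartiteAbove (fun (p : Stratum × Fin 2) x => x ∈ p.1.verts)
        G.finV.toFinset p = l.toFinset := by
      ext x
      rw [Finset.mem_bipartiteAbove, h, Set.Finite.mem_toFinset, List.mem_toFinset]
      exact ⟨fun hx => hx.2, fun hx => ⟨hlV x hx, hx⟩⟩
    rw [this, List.toFinset_card_of_nodup hl, h]
    rfl
  rw [Finset.sum_congr rfl hlen, Finset.sum_card_bipartiteAbove_eq_sum_card_bipartiteBelow]
  have htwo : ∀ x ∈ G.finV.toFinset,
      (Finset.bipartiteBelow (fun (p : Stratum × Fin 2) x => x ∈ p.1.verts)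
        hS.toFinset x).card = 2 := by
    intro x hx
    refine Eq.trans ?_ (ncard_strata_through hε hreg hopen (G.finV.mem_toFinset.1 hx))
    rw [← Set.ncard_coe_finset]
    congr 1
    ext p
    simp
  rw [Finset.sum_congr rfl htwo, Finset.sum_const, ← Set.ncard_eq_toFinset_card _ G.finV, hn,
    smul_eq_mul, mul_comm]

end
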